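/- For every integer n ≥ 3, consider the instance 𝓘ₙ of the oblivious knapsack problem with items {1,…,n}, where l(i) = Fₙ + Fᵢ − 1 and v(i) = 1 + i/n (Fᵢ being the i-th Fibonacci number with F₁ = F₂ = 1). Then for every item i ∈ {1,…,n} there exists a capacity C with l(i) ≤ C ≤ l(𝓘ₙ) such that l(i) + l(j) > C for every item j ≠ i (so any packing whose first packed item is i packs only the single item i for capacity C), while v(Opt(𝓘ₙ,C)) > (2 − 4/n)·v(i). -/

import Mathlib

/-!
Every size is at least `fib n`, so a second item fits after `i` only if the capacity reaches
`l i + fib n`.  For items `1` and `2` the capacity `2 * fib n - 1 = l n` leaves no room for a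
second item, while the last item alone has value `2`.  For an item `i ≥ 3` the capacity
`l i + fib n - 1` leaves no room for a second item, while the Fibonacci recurrence gives
`l (i - 1) + l (i - 2) = l i + fib n - 1`, so the two preceding items fill it exactly; their
joint value `2 + (2 * i - 3) / n` exceeds `(2 - 4 / n) * (1 + i / n)`.
-/

/-- For every `n ≥ 3`, consider the instance with items
`{1,…,n}` (modelled as `i : Fin n`, representing item `i+1`), sizes
`l(i) = Fₙ + Fᵢ − 1` and values `v(i) = 1 + i/n`.  Then for every item `i`
there is a capacity `C` with `l(i) ≤ C ≤ l(𝓘)` such that no second item fits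
after `i` (i.e. `l(i) + l(j) > C` for all `j ≠ i`), while
`v(Opt(𝓘,C)) > (2 − 4/n)·v(i)`. -/
theorem lower_bound_general (n : ℕ) (hn : 3 ≤ n) (v l : Fin n → ℚ)
    (hv : ∀ i : Fin n, v i = 1 + (((i : ℕ) : ℚ) + 1) / (n : ℚ))
    (hl : ∀ i : Fin n, l i = (Nat.fib n : ℚ) + (Nat.fib ((i : ℕ) + 1) : ℚ) - 1)
    (i : Fin n) :
    ∃ C : ℚ, l i ≤ C ∧ C ≤ ∑ j, l j ∧
      (∀ j : Fin n, j ≠ i → C < l i + l j) ∧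
      ∃ S : Finset (Fin n), ∑ j ∈ S, l j ≤ C ∧
        (2 - 4 / (n : ℚ)) * v i < ∑ j ∈ S, v j := by
  have hnQ : (3 : ℚ) ≤ n := by exact_mod_cast hn
  have hpos : (0 : ℚ) < n := by linarith
  have fib_pos (k : ℕ) : (1 : ℚ) ≤ (Nat.fib (k + 1) : ℚ) := by
    exact_mod_cast Nat.fib_pos.2 (Nat.succ_pos k)
  have hlow (j : Fin n) : (Nat.fib n : ℚ) ≤ l j := by
    rw [hl]; linarith [fib_pos j]
  have fib_two : (2 : ℚ) ≤ (Nat.fib n : ℚ) := by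
    exact_mod_cast (show Nat.fib 3 ≤ Nat.fib n from Nat.fib_mono hn)
  -- Any capacity below the size of some pair containing `i` is below the total size.
  have htotal (C : ℚ) (hC : ∀ j : Fin n, j ≠ i → C < l i + l j) : C ≤ ∑ j, l j := by
    haveI : Nontrivial (Fin n) := Fin.nontrivial_iff_two_le.2 (by omega)
    obtain ⟨j, hj⟩ := exists_ne i
    have h : ∑ k ∈ ({i, j} : Finset (Fin n)), l k ≤ ∑ k, l k :=
      Finset.sum_le_sum_of_subset_of_nonneg (Finset.subset_univ _)
        fun k _ _ => by linarith [hlow k]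
    rw [Finset.sum_pair hj.symm] at h
    linarith [hC j hj]
  obtain ⟨k, hk⟩ := i
  by_cases hk2 : k < 2
  · have hfit : ∀ j : Fin n, j ≠ ⟨k, hk⟩ → 2 * (Nat.fib n : ℚ) - 1 < l ⟨k, hk⟩ + l j :=
      fun j _ => by linarith [hlow j, hlow ⟨k, hk⟩]
    refine ⟨2 * (Nat.fib n : ℚ) - 1, ?_, htotal _ hfit, hfit, {⟨n - 1, by omega⟩}, ?_, ?_⟩
    · have h1 : Nat.fib (k + 1) = 1 := by interval_cases k <;> rfl
      simp only [hl, h1]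
      push_cast
      linarith
    · simp only [Finset.sum_singleton, hl, Nat.sub_add_cancel (show 1 ≤ n by omega)]
      linarith
    · have hkQ : (k : ℚ) ≤ 1 := by exact_mod_cast Nat.le_of_lt_succ hk2
      simp only [Finset.sum_singleton, hv]
      rw [Nat.cast_sub (show 1 ≤ n by omega), Nat.cast_one, sub_add_cancel,
        div_self hpos.ne', ← sub_pos]
      have e : 1 + 1 - (2 - 4 / (n : ℚ)) * (1 + ((k : ℚ) + 1) / n)
          = (2 * (n : ℚ) * (1 - k) + 4 * (k + 1)) / n ^ 2 := by
        field_simp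
        ring
      rw [e]
      have h0 : 0 ≤ 2 * (n : ℚ) * (1 - k) := mul_nonneg (by linarith) (by linarith)
      positivity
  · obtain ⟨m, rfl⟩ : ∃ m, k = m + 2 := ⟨k - 2, by omega⟩
    have hfit : ∀ j : Fin n, j ≠ ⟨m + 2, hk⟩ →
        l ⟨m + 2, hk⟩ + (Nat.fib n : ℚ) - 1 < l ⟨m + 2, hk⟩ + l j :=
      fun j _ => by linarith [hlow j]
    have hne : (⟨m, by omega⟩ : Fin n) ≠ ⟨m + 1, by omega⟩ := by simp
    refine ⟨l ⟨m + 2, hk⟩ + (Nat.fib n : ℚ) - 1, by linarith, htotal _ hfit, hfit,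
      {⟨m, by omega⟩, ⟨m + 1, by omega⟩}, ?_, ?_⟩
    · have hf : (Nat.fib (m + 2 + 1) : ℚ) = Nat.fib (m + 1) + Nat.fib (m + 1 + 1) := by
        exact_mod_cast Nat.fib_add_two (n := m + 1)
      rw [Finset.sum_pair hne]
      simp only [hl, hf]
      linarith
    · rw [Finset.sum_pair hne, ← sub_pos]
      simp only [hv]
      push_cast
      have e : 1 + ((m : ℚ) + 1) / n + (1 + ((m : ℚ) + 1 + 1) / n)
          - (2 - 4 / (n : ℚ)) * (1 + ((m : ℚ) + 2 + 1) / n)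
          = ((n : ℚ) + 4 * (m + 3)) / n ^ 2 := by
        field_simp
        ring
      rw [e]
      positivity
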